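/- Let R be a commutative ring, l ≥ 1, and let T_1, ..., T_l be square matrices over R. For every positive integer N, ∑ S(s_1,T_1) · S(s_2,T_2) · ... · S(s_l,T_l) = S(N, T_1 ⊗ T_2 ⊗ ... ⊗ T_l), where the sum runs over all l-tuples (s_1,...,s_l) of positive divisors of N with lcm(s_1,...,s_l) = N, and T_1 ⊗ ... ⊗ T_l is the iterated Kronecker product. -/

import Mathlib

/-- `S(N,T) = ∑_{g ∣ N} μ(g) · Tr(T^{N/g})` for a square matrix `T` over a
commutative ring. -/
def moebiusTraceSum {R : Type*} [CommRing R] {α : Type*} [Fintype α]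
    [DecidableEq α] (T : Matrix α α R) (N : ℕ) : R :=
  ∑ g ∈ N.divisors, (ArithmeticFunction.moebius g) • Matrix.trace (T ^ (N / g))

/-- The iterated Kronecker product of a family of square matrices
`T i : Matrix (Fin (m i)) (Fin (m i)) R`, `i : Fin l`: its rows and columns are
indexed by tuples, and its `(x, y)` entry is `∏ i, (T i) (x i) (y i)`. -/
def iteratedKronecker {R : Type*} [CommRing R] {l : ℕ} {m : Fin l → ℕ}
    (T : (i : Fin l) → Matrix (Fin (m i)) (Fin (m i)) R) :
    Matrix ((i : Fin l) → Fin (m i)) ((i : Fin l) → Fin (m i)) R :=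
  Matrix.of fun x y => ∏ i, T i (x i) (y i)

theorem sum_divisors_moebiusTraceSum {R : Type*} [CommRing R] {α : Type*} [Fintype α]
    [DecidableEq α] (T : Matrix α α R) {N : ℕ} (hN : 0 < N) :
    ∑ d ∈ N.divisors, moebiusTraceSum T d = Matrix.trace (T ^ N) := by
  refine (ArithmeticFunction.sum_eq_iff_sum_smul_moebius_eq
    (f := moebiusTraceSum T) (g := fun n => Matrix.trace (T ^ n))).2 (fun n _ => ?_) N hN
  exact Nat.sum_divisorsAntidiagonal
    (f := fun a b => ArithmeticFunction.moebius a • Matrix.trace (T ^ b))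

theorem iteratedKronecker_one {R : Type*} [CommRing R] {l : ℕ} {m : Fin l → ℕ} :
    iteratedKronecker (fun i => (1 : Matrix (Fin (m i)) (Fin (m i)) R)) = 1 := by
  ext x y
  simp [iteratedKronecker, Matrix.one_apply, Finset.prod_ite_zero, funext_iff]

theorem iteratedKronecker_mul {R : Type*} [CommRing R] {l : ℕ} {m : Fin l → ℕ}
    (A B : (i : Fin l) → Matrix (Fin (m i)) (Fin (m i)) R) :
    iteratedKronecker (fun i => A i * B i) = iteratedKronecker A * iteratedKronecker B := by
  ext x y
  simp [iteratedKronecker, Matrix.mul_apply, Fintype.prod_sum, Finset.prod_mul_distrib]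

theorem iteratedKronecker_pow {R : Type*} [CommRing R] {l : ℕ} {m : Fin l → ℕ}
    (T : (i : Fin l) → Matrix (Fin (m i)) (Fin (m i)) R) (n : ℕ) :
    iteratedKronecker (fun i => T i ^ n) = iteratedKronecker T ^ n := by
  induction n with
  | zero => simp [iteratedKronecker_one]
  | succ n ih => simp [pow_succ, iteratedKronecker_mul, ih]

theorem trace_iteratedKronecker {R : Type*} [CommRing R] {l : ℕ} {m : Fin l → ℕ}
    (T : (i : Fin l) → Matrix (Fin (m i)) (Fin (m i)) R) :
    Matrix.trace (iteratedKronecker T) = ∏ i, Matrix.trace (T i) := by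
  simp [iteratedKronecker, Matrix.trace, Fintype.prod_sum]

/-- Tuples of divisors of `N`, sorted by the value of their least common multiple. -/
theorem sum_divisors_sum_filter_lcm {ι M : Type*} [Fintype ι] [DecidableEq ι]
    [AddCommMonoid M] (f : (ι → ℕ) → M) {N : ℕ} (hN : 0 < N) :
    ∑ d ∈ N.divisors, ∑ s ∈ (Fintype.piFinset fun _ : ι => d.divisors).filter
        (fun s => Finset.univ.lcm s = d), f s =
      ∑ s ∈ Fintype.piFinset fun _ : ι => N.divisors, f s := by
  have lcm_mem : ∀ s ∈ Fintype.piFinset fun _ : ι => N.divisors,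
      Finset.univ.lcm s ∈ N.divisors := fun s hs => by
    simp only [Fintype.mem_piFinset, Nat.mem_divisors] at hs
    exact Nat.mem_divisors.2 ⟨Finset.lcm_dvd fun i _ => (hs i).1, hN.ne'⟩
  rw [← Finset.sum_fiberwise_of_maps_to lcm_mem]
  refine Finset.sum_congr rfl fun d hd => Finset.sum_congr ?_ fun _ _ => rfl
  have hdN := Nat.dvd_of_mem_divisors hd
  have hd0 : d ≠ 0 := (Nat.pos_of_mem_divisors hd).ne'
  ext s
  simp only [Finset.mem_filter, Fintype.mem_piFinset, Nat.mem_divisors]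
  refine and_congr_left fun hs => forall_congr' fun i => ?_
  have hi : s i ∣ d := hs ▸ Finset.dvd_lcm (Finset.mem_univ i)
  simp [hi, hi.trans hdN, hd0, hN.ne']

theorem carlitz_relation_iterated
    {R : Type*} [CommRing R] (l : ℕ) (hl : 0 < l) (m : Fin l → ℕ)
    (T : (i : Fin l) → Matrix (Fin (m i)) (Fin (m i)) R)
    (N : ℕ) (hN : 0 < N) :
    ∑ s ∈ (Fintype.piFinset fun _ : Fin l => N.divisors).filter
        (fun s => Finset.univ.lcm s = N),
        ∏ i, moebiusTraceSum (T i) (s i) =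
      moebiusTraceSum (iteratedKronecker T) N := by
  have inversion := (ArithmeticFunction.sum_eq_iff_sum_smul_moebius_eq
    (f := fun n => ∑ s ∈ (Fintype.piFinset fun _ : Fin l => n.divisors).filter
        (fun s => Finset.univ.lcm s = n), ∏ i, moebiusTraceSum (T i) (s i))
    (g := fun n => Matrix.trace (iteratedKronecker T ^ n))).1 (fun n hn => by
      rw [sum_divisors_sum_filter_lcm _ hn, ← iteratedKronecker_pow, trace_iteratedKronecker,
        ← Finset.prod_univ_sum]
      exact Finset.prod_congr rfl fun i _ => sum_divisors_moebiusTraceSum (T i) hn) N hN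
  rw [← inversion]
  exact Nat.sum_divisorsAntidiagonal
    (f := fun a b => ArithmeticFunction.moebius a • Matrix.trace (iteratedKronecker T ^ b))
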